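/- Let ν > 0. For every x ∈ (0,1): lim_{ε→0+} D_2(x+iε)·D_2(x−iε) = e^{−νπi/2}, and for every x ∈ (−1,0): lim_{ε→0+} D_2(x+iε)·D_2(x−iε) = e^{νπi/2}. -/

import Mathlib

open Filter Real Topology

/-- `(z²-1)^{1/2} = z √(1 - z⁻²)`, the branch analytic on `ℂ∖[-1,1]` which is positive
for real `z > 1`. -/
noncomputable def sqBranch (z : ℂ) : ℂ := z * (1 - z⁻¹ ^ 2) ^ ((1 : ℂ) / 2)

/-- The second Szegő function
`D₂(z) = exp((ν/4) Log(((z²-1)^{1/2}-i)/((z²-1)^{1/2}+i)))`. -/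
noncomputable def D2 (ν : ℝ) (z : ℂ) : ℂ :=
  Complex.exp ((ν / 4 : ℂ) *
    Complex.log ((sqBranch z - Complex.I) / (sqBranch z + Complex.I)))

open Complex in
theorem sqB_facts (z : ℂ) (hx : z.re ≠ 0) (hy : 0 < z.im) :
    sqBranch z ^ 2 = z ^ 2 - 1 ∧ 0 < z.re * (sqBranch z).re ∧
      sqBranch (starRingEnd ℂ z) = starRingEnd ℂ (sqBranch z) := by
  have hz : z ≠ 0 := by
    rintro rfl
    simp at hx
  set u : ℂ := 1 - z⁻¹ ^ 2 with hu
  set r : ℂ := u ^ ((1 : ℂ) / 2) with hr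
  have hw : sqBranch z = z * r := rfl
  have hr2 : r ^ 2 = u := by
    have := Complex.cpow_nat_inv_pow u (n := 2) two_ne_zero
    rw [hr]
    simpa using this
  have hzu : z ^ 2 * u = z ^ 2 - 1 := by
    rw [hu]
    field_simp
  have hw2 : sqBranch z ^ 2 = z ^ 2 - 1 := by
    rw [hw, mul_pow, hr2, hzu]
  have harg : u.arg ≠ π := by
    intro h
    rw [Complex.arg_eq_pi_iff] at h
    have h1 := congrArg Complex.im hzu
    have h2 := congrArg Complex.re hzu
    simp only [pow_two, Complex.mul_im, Complex.mul_re, Complex.sub_im, Complex.sub_re,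
      Complex.one_re, Complex.one_im, h.2] at h1 h2
    have h3 : z.re * z.im * (u.re - 1) = 0 := by linarith
    have h4 : u.re - 1 ≠ 0 := by linarith [h.1]
    exact (mul_ne_zero (mul_ne_zero hx hy.ne') h4) h3
  have hu0 : u ≠ 0 := by
    intro h
    have h1 := congrArg Complex.im hzu
    simp [h, pow_two] at h1
    have : z.re * z.im = 0 := by linarith
    exact mul_ne_zero hx hy.ne' this
  have hrre : 0 ≤ r.re := by
    rw [hr, Complex.cpow_def_of_ne_zero hu0, Complex.exp_re]
    apply mul_nonneg (Real.exp_pos _).le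
    have : (Complex.log u * (1 / 2)).im = u.arg / 2 := by
      simp [Complex.log_im]
      ring
    rw [this]
    apply Real.cos_nonneg_of_mem_Icc
    constructor <;> linarith [Complex.neg_pi_lt_arg u, Complex.arg_le_pi u]
  refine ⟨hw2, ?_, ?_⟩
  · have h1 := congrArg Complex.im hw2
    simp only [pow_two, Complex.mul_im, Complex.sub_im, Complex.one_im] at h1
    have h2 : (sqBranch z).re * z.re + (sqBranch z).im * z.im
        = (z.re ^ 2 + z.im ^ 2) * r.re := by
      rw [hw]
      simp
      ring
    have h3 : 0 ≤ (sqBranch z).re * z.re + (sqBranch z).im * z.im := by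
      rw [h2]
      positivity
    have h4 : ((sqBranch z).re * z.re) * ((sqBranch z).im * z.im) = (z.re * z.im) ^ 2 := by
      linear_combination (z.re * z.im / 2) * h1
    have h5 : 0 < (z.re * z.im) ^ 2 := by
      have := mul_ne_zero hx hy.ne'
      positivity
    by_contra! hneg
    nlinarith
  · rw [hw, map_mul]
    unfold sqBranch
    have h1 : (1 - (starRingEnd ℂ z)⁻¹ ^ 2) = starRingEnd ℂ u := by
      simp [hu]
    have h2 : starRingEnd ℂ ((1 : ℂ) / 2) = 1 / 2 := by
      have := Complex.conj_ofReal (1 / 2)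
      push_cast at this
      exact this
    rw [h1, Complex.conj_cpow _ _ harg, h2]

open Complex in
theorem D2_prod (ν : ℝ) (z : ℂ) (hx : z.re ≠ 0) (hy : 0 < z.im) :
    D2 ν z * D2 ν (starRingEnd ℂ z) =
      Complex.exp ((ν / 2 : ℂ) * Complex.I *
        ((((‖z ^ 2 - 1‖ - 1 : ℝ) : ℂ) + ((-2 * (sqBranch z).re : ℝ) : ℂ) * Complex.I).arg : ℂ)) := by
  obtain ⟨hw2, hpos, hconj⟩ := sqB_facts z hx hy
  unfold D2
  rw [hconj, ← Complex.exp_add, ← hw2, norm_pow]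
  set w := sqBranch z with hw
  have hwre : w.re ≠ 0 := by
    intro h
    simp [h] at hpos
  have h1 : w + I ≠ 0 := by
    intro h
    have := congrArg Complex.re h
    simp at this
    exact hwre this
  have h2 : w - I ≠ 0 := by
    intro h
    have := congrArg Complex.re h
    simp at this
    exact hwre this
  set F : ℂ := ((‖w‖ ^ 2 - 1 : ℝ) : ℂ) + ((-2 * w.re : ℝ) : ℂ) * I with hF
  have hQ : (w - I) / (w + I) = (((‖w + I‖ ^ 2)⁻¹ : ℝ) : ℂ) * F := by
    have h3 : (w - I) * starRingEnd ℂ (w + I) = F := by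
      rw [hF, ← Complex.normSq_eq_norm_sq, Complex.normSq_apply]
      apply Complex.ext
      · simp
        ring
      · simp
        ring
    rw [← h3, ← Complex.normSq_eq_norm_sq, div_eq_mul_inv, Complex.inv_def]
    ring
  have hQarg : ((w - I) / (w + I)).arg = F.arg := by
    rw [hQ]
    apply Complex.arg_real_mul
    have : 0 < ‖w + I‖ := norm_pos_iff.mpr h1
    positivity
  have hFpi : F.arg ≠ π := by
    intro h
    rw [Complex.arg_eq_pi_iff] at h
    have := h.2
    rw [hF, Complex.add_im, Complex.ofReal_im, Complex.im_ofReal_mul, Complex.I_im] at this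
    exact hwre (by linarith)
  have hQ2 : (starRingEnd ℂ w - I) / (starRingEnd ℂ w + I)
      = starRingEnd ℂ (((w - I) / (w + I))⁻¹) := by
    simp [sub_eq_add_neg]
  set Q := (w - I) / (w + I) with hQd
  have hl : Complex.log (starRingEnd ℂ (Q⁻¹)) = - starRingEnd ℂ (Complex.log Q) := by
    rw [Complex.log_conj, Complex.log_inv _ (by rwa [hQarg]), map_neg]
    rw [Complex.arg_inv, if_neg (by rwa [hQarg])]
    have := Complex.neg_pi_lt_arg Q
    have := Complex.neg_pi_lt_arg Q
    intro h
    linarith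
  rw [hQ2, hl]
  have h6 : Complex.log Q - starRingEnd ℂ (Complex.log Q) = 2 * (F.arg : ℂ) * I := by
    rw [Complex.sub_conj, Complex.log_im, hQarg]
    push_cast
    ring
  congr 1
  linear_combination (ν / 4 : ℂ) * h6

open Complex in
theorem F_tendsto (x : ℝ) (hx : x ≠ 0) (hx1 : x ^ 2 < 1) :
    Tendsto (fun ε : ℝ => ((‖((x : ℂ) + ε * I) ^ 2 - 1‖ - 1 : ℝ) : ℂ)
      + ((-2 * (sqBranch (x + ε * I)).re : ℝ) : ℂ) * I) (𝓝[>] 0) (𝓝 ((-x ^ 2 : ℝ) : ℂ)) := by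
  have hn0 : ‖((x : ℂ) + ((0 : ℝ) : ℂ) * I) ^ 2 - 1‖ = 1 - x ^ 2 := by
    have : ((x : ℂ) + ((0 : ℝ) : ℂ) * I) ^ 2 - 1 = ((x ^ 2 - 1 : ℝ) : ℂ) := by
      push_cast
      ring
    rw [this, Complex.norm_real, Real.norm_eq_abs, abs_of_neg (by linarith)]
    ring
  have hn : Tendsto (fun ε : ℝ => ‖((x : ℂ) + ε * I) ^ 2 - 1‖) (𝓝[>] 0) (𝓝 (1 - x ^ 2)) := by
    have hc : Continuous (fun ε : ℝ => ‖((x : ℂ) + ε * I) ^ 2 - 1‖) := by fun_prop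
    have := hc.tendsto 0
    rw [hn0] at this
    exact this.mono_left nhdsWithin_le_nhds
  have hre : Tendsto (fun ε : ℝ => (((x : ℂ) + ε * I) ^ 2 - 1).re) (𝓝[>] 0) (𝓝 (x ^ 2 - 1)) := by
    have hc : Continuous (fun ε : ℝ => (((x : ℂ) + ε * I) ^ 2 - 1).re) := by fun_prop
    have := hc.tendsto 0
    have h0 : (((x : ℂ) + ((0 : ℝ) : ℂ) * I) ^ 2 - 1).re = x ^ 2 - 1 := by
      simp [pow_two]
    rw [h0] at this
    exact this.mono_left nhdsWithin_le_nhds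
  have hw : Tendsto (fun ε : ℝ => (sqBranch (x + ε * I)).re) (𝓝[>] 0) (𝓝 0) := by
    have h1 := ((hn.add hre).div_const 2).sqrt
    have h2 : √((1 - x ^ 2 + (x ^ 2 - 1)) / 2) = 0 := by
      ring_nf
      simp
    rw [h2] at h1
    rw [tendsto_zero_iff_abs_tendsto_zero]
    refine h1.congr' ?_
    filter_upwards [self_mem_nhdsWithin] with ε hε
    have hε' : 0 < ε := hε
    obtain ⟨hw2, -, -⟩ := sqB_facts (x + ε * I) (by simpa using hx) (by simpa using hε')
    rw [← hw2, norm_pow, ← Complex.normSq_eq_norm_sq, Complex.normSq_apply]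
    simp only [Function.comp_apply]
    rw [← Real.sqrt_sq_eq_abs]
    congr 1
    simp [pow_two]
  have := ((Complex.continuous_ofReal.tendsto _).comp (hn.sub_const 1)).add
    (((Complex.continuous_ofReal.tendsto _).comp (hw.const_mul (-2))).mul_const I)
  have he : ((-x ^ 2 : ℝ) : ℂ) = ((1 - x ^ 2 - 1 : ℝ) : ℂ) + ((-2 * 0 : ℝ) : ℂ) * I := by
    push_cast
    ring
  rw [he]
  exact this

open Complex in
theorem D2_lim (ν x θ : ℝ) (hx : x ≠ 0)
    (h : Tendsto (fun ε : ℝ => (((‖((x : ℂ) + ε * I) ^ 2 - 1‖ - 1 : ℝ) : ℂ)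
      + ((-2 * (sqBranch (x + ε * I)).re : ℝ) : ℂ) * I).arg) (𝓝[>] 0) (𝓝 θ)) :
    Tendsto (fun ε : ℝ => D2 ν (x + ε * Complex.I) * D2 ν (x - ε * Complex.I))
        (𝓝[>] 0) (𝓝 (Complex.exp ((ν / 2 : ℂ) * I * θ))) := by
  have h1 := (Complex.continuous_exp.tendsto _).comp
    (((Complex.continuous_ofReal.tendsto _).comp h).const_mul ((ν / 2 : ℂ) * I))
  refine h1.congr' ?_
  filter_upwards [self_mem_nhdsWithin] with ε hε
  have hε' : 0 < ε := hε
  have := D2_prod ν (x + ε * I) (by simpa using hx) (by simpa using hε')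
  have hc : starRingEnd ℂ ((x : ℂ) + ε * I) = x - ε * I := by
    simp [sub_eq_add_neg]
  rw [hc] at this
  rw [this]
  rfl

/-- **Lemma (boundary values of the second Szegő function).**
For `ν > 0` and `x ∈ (0,1)`: `D₂₊(x) D₂₋(x) = e^{-νπi/2}`, while for `x ∈ (-1,0)`:
`D₂₊(x) D₂₋(x) = e^{νπi/2}`, where `D₂±(x) = lim_{ε→0+} D₂(x ± iε)`. -/
theorem D2_boundary_values (ν : ℝ) (hν : 0 < ν) (x : ℝ) :
    (x ∈ Set.Ioo (0 : ℝ) 1 →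
      Tendsto (fun ε : ℝ => D2 ν (x + ε * Complex.I) * D2 ν (x - ε * Complex.I))
        (𝓝[>] 0) (𝓝 (Complex.exp (-(ν : ℂ) * π * Complex.I / 2)))) ∧
    (x ∈ Set.Ioo (-1 : ℝ) 0 →
      Tendsto (fun ε : ℝ => D2 ν (x + ε * Complex.I) * D2 ν (x - ε * Complex.I))
        (𝓝[>] 0) (𝓝 (Complex.exp ((ν : ℂ) * π * Complex.I / 2)))) := by
  constructor
  · rintro ⟨h0, h1⟩
    have hx1 : x ^ 2 < 1 := by nlinarith
    have hF := F_tendsto x h0.ne' hx1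
    have hneg : (0 : ℝ) < x ^ 2 := by positivity
    have key := D2_lim ν x (-π) h0.ne' (by
      refine (Complex.tendsto_arg_nhdsWithin_im_neg_of_re_neg_of_im_zero
        (z := ((-x ^ 2 : ℝ) : ℂ)) ?_ ?_).comp (tendsto_nhdsWithin_iff.mpr ⟨hF, ?_⟩)
      · rw [Complex.ofReal_re]
        linarith
      · rw [Complex.ofReal_im]
      · filter_upwards [self_mem_nhdsWithin] with ε hε
        have hε' : 0 < ε := hε
        obtain ⟨-, hp, -⟩ := sqB_facts (x + ε * Complex.I) (by simpa using h0.ne')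
          (by simpa using hε')
        have hp2 : 0 < x * (sqBranch (x + ε * Complex.I)).re := by simpa using hp
        have hp3 := (mul_pos_iff_of_pos_left h0).mp hp2
        rw [Complex.add_im, Complex.ofReal_im, Complex.im_ofReal_mul, Complex.I_im]
        linarith)
    convert key using 3
    push_cast
    ring
  · rintro ⟨h1, h0⟩
    have hx1 : x ^ 2 < 1 := by nlinarith
    have hF := F_tendsto x h0.ne hx1
    have hneg : (0 : ℝ) < x ^ 2 := by nlinarith
    have key := D2_lim ν x π h0.ne (by
      have hcw := Complex.continuousWithinAt_arg_of_re_neg_of_im_zero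
        (z := ((-x ^ 2 : ℝ) : ℂ)) (by rw [Complex.ofReal_re]; linarith) (Complex.ofReal_im _)
      have hcw2 := hcw.tendsto
      rw [Complex.arg_ofReal_of_neg (by linarith)] at hcw2
      refine hcw2.comp (tendsto_nhdsWithin_iff.mpr ⟨hF, ?_⟩)
      filter_upwards [self_mem_nhdsWithin] with ε hε
      have hε' : 0 < ε := hε
      obtain ⟨-, hp, -⟩ := sqB_facts (x + ε * Complex.I) (by simpa using h0.ne)
        (by simpa using hε')
      have hp2 : 0 < x * (sqBranch (x + ε * Complex.I)).re := by simpa using hp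
      have hp3 : (sqBranch (x + ε * Complex.I)).re < 0 := by
        by_contra! hh
        nlinarith
      rw [Complex.add_im, Complex.ofReal_im, Complex.im_ofReal_mul, Complex.I_im]
      linarith)
    convert key using 3
    ring
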